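/- Let a < 0 < b and M > 0. There exists a constant C > 0 such that for all t > 0 and all x ≤ at: ∫₀^t ∫_{−∞}^0 (t−s)^{−1} e^{−(x−y−b(t−s))²/(M(t−s))} (1+s)^{−1/2} s^{−1/2} e^{−(y−as)²/(Ms)} dy ds ≤ C (1+t)^{−1/2} e^{−(x−at)²/(Mt)}. -/

import Mathlib

open MeasureTheory Set

/-- Completing the square in the product of two Gaussians centred on the lines of speed `b` and
`a`, with the cross terms dropped outside the cone `x ≤ a * t`. -/
lemma exp_mul_exp_le_outside_cone {a b M t s x : ℝ} (ha : a < 0) (hb : 0 < b) (hM : 0 < M)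
    (hs : 0 < s) (hst : s < t) (hx : x ≤ a * t) (y : ℝ) :
    Real.exp (-(x - y - b * (t - s)) ^ 2 / (M * (t - s))) *
        Real.exp (-(y - a * s) ^ 2 / (M * s)) ≤
      Real.exp (-(x - a * t) ^ 2 / (M * t)) *
        Real.exp (-(t / (M * (t - s) * s)) *
          (y - (a * s + s * (x - a * s - b * (t - s)) / t)) ^ 2) := by
  have hτ : 0 < t - s := sub_pos.2 hst
  have ht : 0 < t := hs.trans hst
  rw [← Real.exp_add, ← Real.exp_add, Real.exp_le_exp]
  have key : -(x - y - b * (t - s)) ^ 2 / (M * (t - s)) + -(y - a * s) ^ 2 / (M * s) =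
      -(x - a * s - b * (t - s)) ^ 2 / (M * t) + -(t / (M * (t - s) * s)) *
          (y - (a * s + s * (x - a * s - b * (t - s)) / t)) ^ 2 := by
    obtain ⟨r, rfl⟩ : ∃ r, t = s + r := ⟨t - s, by ring⟩
    have hr : s + r - s = r := by ring
    rw [hr] at hτ ⊢
    field_simp
    ring
  rw [key]
  gcongr ?_ / _ + _
  nlinarith [mul_nonneg (sub_nonneg.2 hx) (mul_nonneg (sub_pos.2 (ha.trans hb)).le hτ.le),
    sq_nonneg ((b - a) * (t - s))]

/-- The time weights left after integrating out the space variable are dominated by two integrable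
singularities. -/
lemma inv_sqrt_mul_inv_sqrt_le {t s : ℝ} (hs : 0 < s) (hst : s < t) :
    (√(t - s))⁻¹ * (√(1 + s))⁻¹ ≤ (√(1 + t))⁻¹ * ((√(t - s))⁻¹ + (√s)⁻¹) := by
  have hτ : 0 < t - s := sub_pos.2 hst
  have h1 : √(1 + t) ≤ √(t - s) + √(1 + s) := by
    refine Real.sqrt_le_iff.2 ⟨by positivity, ?_⟩
    nlinarith [Real.sq_sqrt hτ.le, Real.sq_sqrt (show 0 ≤ 1 + s by linarith),
      mul_nonneg (Real.sqrt_nonneg (t - s)) (Real.sqrt_nonneg (1 + s))]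
  have p1 : 0 < √(1 + t) := Real.sqrt_pos.2 (by linarith)
  have p2 : 0 < √(t - s) := Real.sqrt_pos.2 hτ
  have p3 : 0 < √(1 + s) := Real.sqrt_pos.2 (by linarith)
  have h2 : (√(1 + s))⁻¹ ≤ (√s)⁻¹ :=
    inv_anti₀ (Real.sqrt_pos.2 hs) (Real.sqrt_le_sqrt (by linarith))
  calc (√(t - s))⁻¹ * (√(1 + s))⁻¹
      = (√(1 + t))⁻¹ * (√(1 + t) * ((√(t - s))⁻¹ * (√(1 + s))⁻¹)) := by field_simp
    _ ≤ (√(1 + t))⁻¹ * ((√(t - s) + √(1 + s)) * ((√(t - s))⁻¹ * (√(1 + s))⁻¹)) := by gcongr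
    _ = (√(1 + t))⁻¹ * ((√(t - s))⁻¹ + (√(1 + s))⁻¹) := by field_simp; ring
    _ ≤ _ := by gcongr

lemma rpow_neg_half_eq_inv_sqrt {u : ℝ} (hu : 0 ≤ u) : u ^ (-(1 / 2 : ℝ)) = (√u)⁻¹ := by
  rw [Real.rpow_neg hu, Real.sqrt_eq_rpow]

/-- The space integral of the interaction, at a fixed intermediate time. -/
lemma inner_integral_le_outside_cone {a b M t s x : ℝ} (ha : a < 0) (hb : 0 < b) (hM : 0 < M)
    (hs : 0 < s) (hst : s < t) (hx : x ≤ a * t) :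
    (∫ y in Set.Iic (0 : ℝ),
        (t - s)⁻¹ * Real.exp (-(x - y - b * (t - s)) ^ 2 / (M * (t - s))) *
          ((1 + s) ^ (-(1 / 2 : ℝ)) * s ^ (-(1 / 2 : ℝ))) *
          Real.exp (-(y - a * s) ^ 2 / (M * s))) ≤
      √(Real.pi * M) * (√t)⁻¹ * Real.exp (-(x - a * t) ^ 2 / (M * t)) * (√(1 + t))⁻¹ *
        ((t - s) ^ (-(1 / 2 : ℝ)) + s ^ (-(1 / 2 : ℝ))) := by
  have hτ : 0 < t - s := sub_pos.2 hst
  have ht : 0 < t := hs.trans hst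
  rw [rpow_neg_half_eq_inv_sqrt hτ.le, rpow_neg_half_eq_inv_sqrt hs.le,
    rpow_neg_half_eq_inv_sqrt (show 0 ≤ 1 + s by linarith)]
  set E := Real.exp (-(x - a * t) ^ 2 / (M * t))
  set β := t / (M * (t - s) * s) with hβ
  set m := a * s + s * (x - a * s - b * (t - s)) / t with hm
  have hβ0 : 0 < β := by positivity
  set A := (t - s)⁻¹ * ((√(1 + s))⁻¹ * (√s)⁻¹) with hA
  have hA0 : 0 ≤ A := by positivity
  have hg : Integrable (fun y : ℝ => A * E * Real.exp (-β * (y - m) ^ 2)) :=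
    ((integrable_exp_neg_mul_sq hβ0).comp_sub_right m).const_mul _
  have hgauss : ∫ y : ℝ, Real.exp (-β * (y - m) ^ 2) = √(Real.pi / β) := by
    rw [integral_sub_right_eq_self (fun y : ℝ => Real.exp (-β * y ^ 2)) m, integral_gaussian]
  have hsq : √(Real.pi / β) = √(Real.pi * M) * (√t)⁻¹ * √(t - s) * √s := by
    have : Real.pi / β = Real.pi * M * t⁻¹ * (t - s) * s := by
      rw [hβ]; field_simp
    rw [this, Real.sqrt_mul (by positivity), Real.sqrt_mul (by positivity),
      Real.sqrt_mul (by positivity), Real.sqrt_inv]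
  calc _ ≤ ∫ y in Set.Iic (0 : ℝ), A * E * Real.exp (-β * (y - m) ^ 2) := by
        refine integral_mono_of_nonneg (.of_forall fun y => by positivity) hg.integrableOn
          (.of_forall fun y => ?_)
        have := mul_le_mul_of_nonneg_left
          (exp_mul_exp_le_outside_cone ha hb hM hs hst hx y) hA0
        rw [← hβ, ← hm] at this
        calc _ = _ := by rw [hA]; ring
          _ ≤ _ := this
          _ = _ := by ring
    _ ≤ ∫ y : ℝ, A * E * Real.exp (-β * (y - m) ^ 2) :=
        setIntegral_le_integral hg (.of_forall fun y => by positivity)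
    _ = √(Real.pi * M) * (√t)⁻¹ * E * ((√(t - s))⁻¹ * (√(1 + s))⁻¹) := by
        rw [integral_const_mul, hgauss, hsq, hA]
        have p4 : 0 < √s := Real.sqrt_pos.2 hs
        have h : (t - s)⁻¹ * √(t - s) = (√(t - s))⁻¹ := by
          rw [← div_eq_inv_mul, Real.sqrt_div_self', one_div]
        have h' : (√s)⁻¹ * √s = 1 := inv_mul_cancel₀ p4.ne'
        linear_combination (√(1 + s))⁻¹ * E * √(Real.pi * M) * (√t)⁻¹ * ((√s)⁻¹ * √s * h +
          (√(t - s))⁻¹ * h')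
    _ ≤ √(Real.pi * M) * (√t)⁻¹ * E * ((√(1 + t))⁻¹ * ((√(t - s))⁻¹ + (√s)⁻¹)) :=
        mul_le_mul_of_nonneg_left (inv_sqrt_mul_inv_sqrt_le hs hst) (by positivity)
    _ = _ := by ring

lemma integrableOn_and_integral_rpow_neg_half_add {t : ℝ} (ht : 0 < t) :
    IntegrableOn (fun s : ℝ => (t - s) ^ (-(1 / 2 : ℝ)) + s ^ (-(1 / 2 : ℝ))) (Ioo 0 t) ∧
      ∫ s in Ioo 0 t, ((t - s) ^ (-(1 / 2 : ℝ)) + s ^ (-(1 / 2 : ℝ))) = 4 * √t := by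
  have h1 : IntervalIntegrable (fun s : ℝ => s ^ (-(1 / 2 : ℝ))) volume 0 t :=
    intervalIntegral.intervalIntegrable_rpow' (by norm_num)
  have h2 : IntervalIntegrable (fun s : ℝ => (t - s) ^ (-(1 / 2 : ℝ))) volume 0 t := by
    simpa using (h1.comp_sub_left t).symm
  have h3 : ∫ s in (0 : ℝ)..t, s ^ (-(1 / 2 : ℝ)) = 2 * √t := by
    rw [integral_rpow (Or.inl (by norm_num)), Real.sqrt_eq_rpow]
    norm_num
    ring
  have h4 : ∫ s in (0 : ℝ)..t, (t - s) ^ (-(1 / 2 : ℝ)) = 2 * √t := by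
    rw [intervalIntegral.integral_comp_sub_left (fun s : ℝ => s ^ (-(1 / 2 : ℝ))) t]
    simpa using h3
  constructor
  · exact ((intervalIntegrable_iff_integrableOn_Ioo_of_le ht.le).1 (h2.add h1))
  · rw [← integral_Ioc_eq_integral_Ioo, ← intervalIntegral.integral_of_le ht.le,
      intervalIntegral.integral_add h2 h1, h3, h4]
    ring

theorem lax_convection_outside_cone (a b M : ℝ)
    (ha : a < 0) (hb : 0 < b) (hM : 0 < M) :
    ∃ C > 0, ∀ t : ℝ, 0 < t → ∀ x : ℝ, x ≤ a*t →
      (∫ s in Set.Ioo (0:ℝ) t, ∫ y in Set.Iic (0:ℝ),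
          (t - s)⁻¹ * Real.exp (-(x - y - b*(t-s))^2 / (M*(t-s))) *
            ((1 + s) ^ (-(1/2:ℝ)) * s ^ (-(1/2:ℝ))) *
            Real.exp (-(y - a*s)^2 / (M*s))) ≤
        C * (1 + t) ^ (-(1/2:ℝ)) * Real.exp (-(x - a*t)^2 / (M*t)) := by
  refine ⟨4 * √(Real.pi * M), by positivity, fun t ht x hx => ?_⟩
  obtain ⟨hint, hval⟩ := integrableOn_and_integral_rpow_neg_half_add ht
  refine (integral_mono_of_nonneg (g := fun s => √(Real.pi * M) * (√t)⁻¹ *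
    Real.exp (-(x - a * t) ^ 2 / (M * t)) * (√(1 + t))⁻¹ *
      ((t - s) ^ (-(1 / 2 : ℝ)) + s ^ (-(1 / 2 : ℝ)))) ?_ (hint.const_mul _) ?_).trans_eq ?_
  · filter_upwards [ae_restrict_mem measurableSet_Ioo] with s hs
    have hs0 : 0 < s := hs.1
    have hτ : 0 < t - s := sub_pos.2 hs.2
    exact integral_nonneg fun y => by positivity
  · filter_upwards [ae_restrict_mem measurableSet_Ioo] with s hs
    exact inner_integral_le_outside_cone ha hb hM hs.1 hs.2 hx
  · rw [integral_const_mul, hval, rpow_neg_half_eq_inv_sqrt (by linarith)]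
    have : (√t)⁻¹ * √t = 1 := inv_mul_cancel₀ (Real.sqrt_pos.2 ht).ne'
    linear_combination 4 * √(Real.pi * M) * Real.exp (-(x - a * t) ^ 2 / (M * t)) *
      (√(1 + t))⁻¹ * this
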